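/- arXiv:1301.4463 — 2 statements merged into one kernel-verified Lean document; each statement's English description precedes it below -/
import Mathlib

section
/- Let X be a real-valued Lévy process on a filtered probability space satisfying the usual conditions. If for each x > 0 one has X(T_x) = x P-almost surely on the event {T_x < ∞} (i.e., P({X(T_x) = x} ∩ {T_x < ∞}) = P(T_x < ∞)), then the running supremum process X̄_t := sup{X_s : s ∈ [0,t]} is P-almost surely continuous, and X has P-almost surely no positive jumps. -/
open MeasureTheory ProbabilityTheory Filter Set
open scoped ENNReal Topology

/-- Left limit of a path at time `t`, with the convention `f(0-) := f(0)`
(and junk `f t` for `t < 0`). -/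
noncomputable def leftLimAt (f : ℝ → ℝ) (t : ℝ) : ℝ :=
  if 0 < t then Function.leftLim f t else f t

/-- A path `f : [0,∞) → ℝ` is càdlàg: right-continuous on `[0,∞)`,
with left limits on `(0,∞)`. -/
def IsCadlag (f : ℝ → ℝ) : Prop :=
  (∀ t : ℝ, 0 ≤ t → ContinuousWithinAt f (Set.Ici t) t) ∧
  (∀ t : ℝ, 0 < t → ∃ l : ℝ, Filter.Tendsto f (nhdsWithin t (Set.Iio t)) (nhds l))

/-- `X` is a Lévy process w.r.t. the filtration `F` under `P`, on a filtered
probability space satisfying the usual conditions. -/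
structure IsLevy {Ω : Type*} {m0 : MeasurableSpace Ω} (P : Measure Ω)
    (F : MeasureTheory.Filtration ℝ m0) (X : ℝ → Ω → ℝ) : Prop where
  isProb : IsProbabilityMeasure P
  complete : P.IsComplete
  rightCont : ∀ t : ℝ, F t = ⨅ s : Set.Ioi t, F (s : ℝ)
  nullF0 : ∀ N : Set Ω, P N = 0 → MeasurableSet[F 0] N
  adapted : ∀ t : ℝ, Measurable[F t] (X t)
  start : P {ω | X 0 ω = 0} = 1
  cadlag : ∀ᵐ ω ∂P, IsCadlag (fun t => X t ω)
  indep : ∀ s t : ℝ, 0 ≤ s → s ≤ t →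
    ProbabilityTheory.Indep
      (MeasurableSpace.comap (fun ω => X t ω - X s ω) inferInstance) (F s) P
  statInc : ∀ s t : ℝ, 0 ≤ s → s ≤ t →
    Measure.map (fun ω => X t ω - X s ω) P = Measure.map (X (t - s)) P

/-- First passage time `T_x = inf{t ≥ 0 : X_t ≥ x}` (valued in `[0,∞]`, `inf ∅ = ∞`). -/
noncomputable def hitT {Ω : Type*} (X : ℝ → Ω → ℝ) (x : ℝ) (ω : Ω) : ℝ≥0∞ :=
  sInf ((fun t : ℝ => ENNReal.ofReal t) '' {t : ℝ | 0 ≤ t ∧ x ≤ X t ω})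

/-- First passage time `T̂_x = inf{t ≥ 0 : X_t > x}`. -/
noncomputable def hitThat {Ω : Type*} (X : ℝ → Ω → ℝ) (x : ℝ) (ω : Ω) : ℝ≥0∞ :=
  sInf ((fun t : ℝ => ENNReal.ofReal t) '' {t : ℝ | 0 ≤ t ∧ x < X t ω})

/-- `X(T_x)`, the position at the first passage time (junk if `T_x = ∞`). -/
noncomputable def stopVal {Ω : Type*} (X : ℝ → Ω → ℝ) (x : ℝ) (ω : Ω) : ℝ :=
  X (hitT X x ω).toReal ω

/-- `X(T̂_x)`. -/
noncomputable def stopValHat {Ω : Type*} (X : ℝ → Ω → ℝ) (x : ℝ) (ω : Ω) : ℝ :=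
  X (hitThat X x ω).toReal ω

/-- `Q^x(B) = P({X(T_x) ∈ B} ∩ {T_x < ∞})`. -/
noncomputable def Qfun {Ω : Type*} {m0 : MeasurableSpace Ω} (P : Measure Ω)
    (X : ℝ → Ω → ℝ) (x : ℝ) (B : Set ℝ) : ℝ≥0∞ :=
  P ({ω | stopVal X x ω ∈ B} ∩ {ω | hitT X x ω < ⊤})

/-- Running supremum `X̄_t = sup{X_s : s ∈ [0,t]}`. -/
noncomputable def runSup {Ω : Type*} (X : ℝ → Ω → ℝ) (t : ℝ) (ω : Ω) : ℝ :=
  sSup ((fun s => X s ω) '' Set.Icc 0 t)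

open scoped NNReal

def SkipE (f : ℝ → ℝ) (y z : ℝ) : Prop :=
  (∃ q : ℚ, (0 : ℝ) ≤ q ∧ z < f q) ∧
  ∀ q : ℚ, (0 : ℝ) ≤ q → y < f q → f q < z → ∃ r : ℚ, (0 : ℝ) ≤ r ∧ (r : ℝ) ≤ q ∧ z ≤ f r

lemma SkipE_congr {f g : ℝ → ℝ} (hfg : ∀ t, 0 ≤ t → f t = g t) {y z : ℝ} (h : SkipE f y z) :
    SkipE g y z := by
  obtain ⟨⟨q, hq, h1⟩, h2⟩ := h
  refine ⟨⟨q, hq, by rwa [← hfg _ hq]⟩, fun q hq h3 h4 => ?_⟩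
  rw [← hfg _ hq] at h3 h4
  obtain ⟨r, hr, hrq, h5⟩ := h2 q hq h3 h4
  exact ⟨r, hr, hrq, by rwa [← hfg _ hr]⟩

lemma right_nbhd {f : ℝ → ℝ} {t : ℝ} (hf : ContinuousWithinAt f (Set.Ici t) t) {p : ℝ → Prop}
    (hp : ∀ᶠ v in 𝓝 (f t), p v) : ∃ δ > 0, ∀ s, t ≤ s → s < t + δ → p (f s) := by
  have h1 : ∀ᶠ s in 𝓝[Set.Ici t] t, p (f s) := hf hp
  rw [eventually_nhdsWithin_iff, Metric.eventually_nhds_iff] at h1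
  obtain ⟨δ, hδ, h⟩ := h1
  refine ⟨δ, hδ, fun s h2 h3 => h ?_ h2⟩
  rw [Real.dist_eq, abs_lt]; constructor <;> linarith

lemma path_level {f : ℝ → ℝ} (hf : ∀ t : ℝ, 0 ≤ t → ContinuousWithinAt f (Set.Ici t) t)
    (hE : ∀ y z : ℚ, (0 : ℝ) < y → (y : ℝ) < z → ¬ SkipE f y z) {τ c : ℝ} (hτ : 0 ≤ τ) (hc : 0 ≤ c)
    (h : ∀ s, 0 ≤ s → s < τ → f s ≤ c) : f τ ≤ c := by
  by_contra! hlt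
  obtain ⟨y, hy1, hy2⟩ := exists_rat_btwn hlt
  obtain ⟨z, hz1, hz2⟩ := exists_rat_btwn hy2
  obtain ⟨δ, hδ, hd⟩ := right_nbhd (hf τ hτ) (p := fun v => (z : ℝ) < v) (eventually_gt_nhds hz2)
  have key : ∀ b, τ < b → ∃ r : ℚ, (0 : ℝ) ≤ r ∧ (r : ℝ) < b ∧ (z : ℝ) < f r := by
    intro b hb
    obtain ⟨r, hr1, hr2⟩ := exists_rat_btwn (show τ < min b (τ + δ) from lt_min hb (by linarith))
    have := lt_min_iff.1 hr2
    exact ⟨r, by linarith, this.1, hd _ hr1.le this.2⟩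
  refine hE y z (by linarith) hz1 ⟨?_, fun q hq h1 h2 => ?_⟩
  · obtain ⟨r, h1, -, h2⟩ := key (τ + 1) (by linarith)
    exact ⟨r, h1, h2⟩
  · have hq1 : τ < q := by
      rcases lt_trichotomy (q : ℝ) τ with h3 | h3 | h3
      · have := h _ hq h3; linarith
      · rw [h3] at h2; linarith
      · exact h3
    obtain ⟨r, h4, h5, h6⟩ := key q hq1
    exact ⟨r, h4, h5.le, h6.le⟩

lemma cadlag_bdd {f : ℝ → ℝ} (hf : IsCadlag f) (t : ℝ) : BddAbove (f '' Set.Icc 0 t) := by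
  refine isCompact_Icc.induction_on (p := fun s => BddAbove (f '' s)) (by simp)
    (fun s t hst ht => ht.mono (image_mono hst))
    (fun s t hs ht => by rw [image_union]; exact hs.union ht) ?_
  intro x hx
  have hev : ∃ M, ∀ᶠ s in 𝓝[Set.Icc 0 t] x, f s ≤ M := by
    have h1 : ∀ᶠ s in 𝓝[Set.Ici x] x, f s ≤ f x + 1 :=
      (hf.1 x hx.1).eventually (eventually_le_nhds (by linarith : f x < f x + 1))
    rcases hx.1.eq_or_lt with h0 | h0
    · subst h0
      exact ⟨_, nhdsWithin_mono _ (fun s hs => hs.1) h1⟩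
    · obtain ⟨l, hl⟩ := hf.2 x h0
      have h2 : ∀ᶠ s in 𝓝[Set.Iio x] x, f s ≤ l + 1 :=
        hl.eventually (eventually_le_nhds (by linarith : l < l + 1))
      refine ⟨max (f x + 1) (l + 1), ?_⟩
      have h3 : ∀ᶠ s in 𝓝 x, f s ≤ max (f x + 1) (l + 1) := by
        rw [← nhdsLT_sup_nhdsGE, eventually_sup]
        exact ⟨h2.mono fun s hs => hs.trans (le_max_right _ _),
          h1.mono fun s hs => hs.trans (le_max_left _ _)⟩
      exact h3.filter_mono nhdsWithin_le_nhds
  obtain ⟨M, hM⟩ := hev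
  refine ⟨_, hM, M, ?_⟩
  rintro _ ⟨s, hs, rfl⟩
  exact hs

lemma path_sup_cont {f : ℝ → ℝ} (hf : IsCadlag f) (h0 : f 0 = 0)
    (hl : ∀ τ c : ℝ, 0 ≤ τ → 0 ≤ c → (∀ s, 0 ≤ s → s < τ → f s ≤ c) → f τ ≤ c) :
    ContinuousOn (fun t => sSup (f '' Set.Icc 0 t)) (Set.Ici 0) := by
  set M : ℝ → ℝ := fun t => sSup (f '' Set.Icc 0 t) with hM
  have le : ∀ s t, 0 ≤ s → s ≤ t → f s ≤ M t := fun s t hs hst =>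
    le_csSup (cadlag_bdd hf t) ⟨s, ⟨hs, hst⟩, rfl⟩
  have sup_le : ∀ t c, 0 ≤ t → (∀ s, 0 ≤ s → s ≤ t → f s ≤ c) → M t ≤ c := fun t c ht h =>
    csSup_le ⟨f 0, 0, ⟨le_rfl, ht⟩, rfl⟩ (by rintro _ ⟨s, hs, rfl⟩; exact h s hs.1 hs.2)
  have mono : ∀ s t, 0 ≤ s → s ≤ t → M s ≤ M t := fun s t hs hst =>
    sup_le _ _ hs fun u hu hus => le _ _ hu (hus.trans hst)
  intro τ hτ
  have hτ : 0 ≤ τ := hτ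
  have hMτ : 0 ≤ M τ := h0 ▸ le 0 τ le_rfl hτ
  rw [Metric.continuousWithinAt_iff]
  intro ε hε
  have hR : ∃ δ > 0, ∀ s, τ ≤ s → s < τ + δ → M s < M τ + ε := by
    obtain ⟨δ, hδ, hd⟩ := right_nbhd (hf.1 τ hτ) (p := fun v => v < f τ + ε / 2)
      (eventually_lt_nhds (by linarith))
    refine ⟨δ, hδ, fun s hs hs' => ?_⟩
    have : M s ≤ M τ + ε / 2 := by
      refine sup_le _ _ (hτ.trans hs) fun u hu hus => ?_
      rcases le_total u τ with h1 | h1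
      · linarith [le u τ hu h1]
      · linarith [hd u h1 (by linarith), le τ τ hτ le_rfl]
    linarith
  have hL : ∃ δ > 0, ∀ s, 0 ≤ s → s ≤ τ → τ - δ < s → M τ - ε < M s := by
    by_cases hex : ∃ u, 0 ≤ u ∧ u < τ ∧ M τ - ε < f u
    · obtain ⟨u, hu, huτ, h1⟩ := hex
      exact ⟨τ - u, by linarith, fun s hs _ h2 => h1.trans_le (le u s hu (by linarith))⟩
    · push Not at hex
      rcases hτ.eq_or_lt with h2 | h2
      · exact ⟨1, one_pos, fun s hs hs' _ => by
          have : s = τ := by linarith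
          subst this; linarith⟩
      · have h3 : 0 ≤ M τ - ε := h0 ▸ hex 0 le_rfl h2
        have h4 := hl τ _ hτ h3 hex
        have : M τ ≤ M τ - ε := sup_le _ _ hτ fun s hs hs' => by
          rcases hs'.eq_or_lt with h5 | h5
          · rw [h5]; exact h4
          · exact hex s hs h5
        linarith
  obtain ⟨δ₁, hδ₁, h1⟩ := hR
  obtain ⟨δ₂, hδ₂, h2⟩ := hL
  refine ⟨min δ₁ δ₂, lt_min hδ₁ hδ₂, fun {s} hs hd => ?_⟩
  have hs : 0 ≤ s := hs
  rw [Real.dist_eq, abs_lt] at hd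
  have ha := min_le_left δ₁ δ₂
  have hb := min_le_right δ₁ δ₂
  rw [Real.dist_eq, abs_lt]
  rcases le_total s τ with h3 | h3
  · have := h2 s hs h3 (by linarith)
    have := mono s τ hs h3
    constructor <;> linarith
  · have := h1 s h3 (by linarith)
    have := mono τ s hτ h3
    constructor <;> linarith

lemma path_jump {f : ℝ → ℝ} (hf : IsCadlag f)
    (hE : ∀ q : ℚ, (0 : ℝ) ≤ q → ∀ y z : ℚ, (0 : ℝ) < y → (y : ℝ) < z →
      ¬ SkipE (fun t => f (q + t) - f q) y z) (t : ℝ) (ht : 0 ≤ t) : f t ≤ leftLimAt f t := by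
  unfold leftLimAt
  split_ifs with h0
  swap
  · exact le_rfl
  obtain ⟨l, hl⟩ := hf.2 t h0
  rw [leftLim_eq_of_tendsto hl]
  by_contra! hlt
  set ε := (f t - l) / 3 with hε
  have hε0 : 0 < ε := by rw [hε]; linarith
  have h1 : ∀ᶠ s in 𝓝[<] t, |f s - l| < ε := by
    have := hl (Metric.ball_mem_nhds l hε0)
    filter_upwards [this] with s hs
    simpa [Real.dist_eq] using hs
  obtain ⟨a, ha, hsub⟩ := (mem_nhdsLT_iff_exists_Ioo_subset).1 h1
  have ha : a < t := ha
  obtain ⟨q, hq1, hq2⟩ := exists_rat_btwn (show max a 0 < t from max_lt ha h0)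
  have hqa := lt_of_le_of_lt (le_max_left a 0) hq1
  have hq0 := lt_of_le_of_lt (le_max_right a 0) hq1
  have hb : ∀ s, (q : ℝ) ≤ s → s < t → |f s - l| < ε := fun s h3 h4 => hsub ⟨by linarith, h4⟩
  have hq := abs_lt.1 (hb q le_rfl hq2)
  have := path_level (f := fun t => f (q + t) - f q) (τ := t - q) (c := 2 * ε) ?_ (hE q hq0.le)
    (by linarith) (by linarith) ?_
  · simp only [add_sub_cancel] at this
    linarith
  · intro s hs
    refine ContinuousWithinAt.sub ?_ continuousWithinAt_const
    refine ContinuousWithinAt.comp (hf.1 (q + s) (by linarith)) (by fun_prop) ?_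
    intro u hu
    simpa using hu
  · intro s hs hs'
    have := abs_lt.1 (hb (q + s) (by linarith) (by linarith))
    linarith

lemma not_skip {Ω : Type*} {X : ℝ → Ω → ℝ} {ω : Ω}
    (hf : ∀ t : ℝ, 0 ≤ t → ContinuousWithinAt (fun t => X t ω) (Set.Ici t) t)
    {x y z : ℝ} (hyx : y < x) (hxz : x < z) (hE : SkipE (fun t => X t ω) y z) :
    hitT X x ω < ⊤ ∧ stopVal X x ω ≠ x := by
  obtain ⟨⟨q, hq, h1⟩, h2⟩ := hE
  simp only at h1 h2
  have hT : hitT X x ω < ⊤ :=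
    lt_of_le_of_lt (sInf_le ⟨(q : ℝ), ⟨hq, (hxz.trans h1).le⟩, rfl⟩) ENNReal.ofReal_lt_top
  refine ⟨hT, fun heq => ?_⟩
  unfold stopVal at heq
  set T := (hitT X x ω).toReal with hTdef
  have hT0 : 0 ≤ T := ENNReal.toReal_nonneg
  obtain ⟨δ, hδ, hd⟩ := right_nbhd (hf T hT0) (p := fun v => y < v ∧ v < z) (by
    simp only [heq]
    exact (eventually_gt_nhds hyx).and (eventually_lt_nhds hxz))
  obtain ⟨p, hp1, hp2⟩ := exists_rat_btwn (show T < T + δ by linarith)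
  obtain ⟨h3, h4⟩ := hd p hp1.le hp2
  obtain ⟨r, hr, hrp, h5⟩ := h2 p (by linarith) h3 h4
  rcases lt_or_ge (r : ℝ) T with h6 | h6
  · have : hitT X x ω ≤ ENNReal.ofReal r := sInf_le ⟨(r : ℝ), ⟨hr, hxz.le.trans h5⟩, rfl⟩
    have := ENNReal.toReal_mono ENNReal.ofReal_ne_top this
    rw [ENNReal.toReal_ofReal hr] at this
    linarith
  · have := (hd r h6 (by linarith)).2
    linarith

lemma measurableSet_skip (y z : ℝ) :
    MeasurableSet {w : ℝ≥0 → ℝ | SkipE (fun t => w t.toNNReal) y z} := by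
  unfold SkipE
  have hm : ∀ q : ℝ, Measurable fun w : ℝ≥0 → ℝ => w q.toNNReal := fun q => measurable_pi_apply _
  have h1 : ∀ (q : ℝ) (c : ℝ), Measurable fun w : ℝ≥0 → ℝ => c < w q.toNNReal := fun q c =>
    Measurable.lt measurable_const (hm q)
  have h2 : ∀ (q : ℝ) (c : ℝ), Measurable fun w : ℝ≥0 → ℝ => w q.toNNReal < c := fun q c =>
    Measurable.lt (hm q) measurable_const
  have h3 : ∀ (q : ℝ) (c : ℝ), Measurable fun w : ℝ≥0 → ℝ => c ≤ w q.toNNReal := fun q c =>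
    measurableSet_setOfPred.1 (measurableSet_le measurable_const (hm q))
  refine Measurable.setOf (Measurable.and ?_ ?_)
  · exact Measurable.exists fun q => measurable_const.and (h1 _ _)
  · refine Measurable.forall fun q => measurable_const.imp ((h1 _ _).imp ((h2 _ _).imp ?_))
    exact Measurable.exists fun r => measurable_const.and (measurable_const.and (h3 _ _))

/-- law induction -/
lemma law_eq {Ω : Type*} {m0 : MeasurableSpace Ω} (P : Measure Ω) [IsProbabilityMeasure P]
    (F G : ℝ≥0 → MeasurableSpace Ω) (hF : ∀ t, F t ≤ m0) (hG : ∀ t, G t ≤ m0)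
    (X Y : ℝ≥0 → Ω → ℝ)
    (hXF : ∀ s t, s ≤ t → Measurable[F t] (X s)) (hYG : ∀ s t, s ≤ t → Measurable[G t] (Y s))
    (hXi : ∀ s t, s ≤ t → Indep (MeasurableSpace.comap (fun ω => X t ω - X s ω) inferInstance)
      (F s) P)
    (hYi : ∀ s t, s ≤ t → Indep (MeasurableSpace.comap (fun ω => Y t ω - Y s ω) inferInstance)
      (G s) P)
    (hinc : ∀ s t, s ≤ t → P.map (fun ω => X t ω - X s ω) = P.map (fun ω => Y t ω - Y s ω))
    (hone : ∀ t, P.map (X t) = P.map (Y t)) :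
    P.map (fun ω t => X t ω) = P.map (fun ω t => Y t ω) := by
  classical
  have hXm : ∀ t, Measurable (X t) := fun t => (hXF t t le_rfl).mono (hF t) le_rfl
  have hYm : ∀ t, Measurable (Y t) := fun t => (hYG t t le_rfl).mono (hG t) le_rfl
  let R : (ℝ≥0 → Ω → ℝ) → Finset ℝ≥0 → Ω → ℝ≥0 → ℝ := fun Z S ω t => if t ∈ S then Z t ω else 0
  have hRm : ∀ (m : MeasurableSpace Ω) (Z : ℝ≥0 → Ω → ℝ) (S : Finset ℝ≥0),
      (∀ t ∈ S, Measurable[m] (Z t)) → Measurable[m] (R Z S) := by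
    intro m Z S hZ
    refine measurable_pi_lambda _ fun t => ?_
    by_cases ht : t ∈ S
    · simpa [R, ht] using hZ t ht
    · simp [R, ht]
  have main : ∀ S : Finset ℝ≥0, P.map (R X S) = P.map (R Y S) := by
    intro S
    induction S using Finset.induction_on_max with
    | empty => simp [R]
    | insert a S hS ih =>
      rcases S.eq_empty_or_nonempty with rfl | hne
      · let φ : ℝ → ℝ≥0 → ℝ := fun v t => if t = a then v else 0
        have hφ : Measurable φ := by
          refine measurable_pi_lambda _ fun t => ?_
          by_cases ht : t = a
          · simp only [φ, ht, if_true]; exact measurable_id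
          · simp [φ, ht]
        have h1 : ∀ Z : ℝ≥0 → Ω → ℝ, R Z (insert a ∅) = φ ∘ Z a := by
          intro Z; ext ω t
          by_cases ht : t = a <;> simp [R, φ, ht]
        rw [h1, h1, ← Measure.map_map hφ (hXm a), ← Measure.map_map hφ (hYm a), hone]
      · set b := S.max' hne with hb
        have hbS : b ∈ S := S.max'_mem hne
        have hba : b < a := hS b hbS
        let φ : (ℝ≥0 → ℝ) × ℝ → ℝ≥0 → ℝ := fun v t => if t = a then v.1 b + v.2 else v.1 t
        have hφ : Measurable φ := by
          refine measurable_pi_lambda _ fun t => ?_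
          by_cases ht : t = a
          · simp only [φ, ht, if_true]; fun_prop
          · simp only [φ, ht, if_false]; fun_prop
        have h1 : ∀ Z : ℝ≥0 → Ω → ℝ,
            R Z (insert a S) = φ ∘ fun ω => (R Z S ω, Z a ω - Z b ω) := by
          intro Z; ext ω t
          by_cases ht : t = a <;> simp [R, φ, ht, hbS]
        have h2 : ∀ (H : ℝ≥0 → MeasurableSpace Ω) (Z : ℝ≥0 → Ω → ℝ), (∀ t, Measurable (Z t)) →
            (∀ s t, s ≤ t → Measurable[H t] (Z s)) →
            (∀ s t, s ≤ t → Indep (MeasurableSpace.comap (fun ω => Z t ω - Z s ω) inferInstance)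
              (H s) P) →
            P.map (R Z (insert a S)) =
              ((P.map (R Z S)).prod (P.map (fun ω => Z a ω - Z b ω))).map φ := by
          intro H Z hZ hZH hZi
          have hm1 := hRm m0 Z S (fun t _ => hZ t)
          have hm2 : Measurable (fun ω => Z a ω - Z b ω) := (hZ a).sub (hZ b)
          have hi : IndepFun (R Z S) (fun ω => Z a ω - Z b ω) P := by
            rw [IndepFun_iff_Indep]
            refine (indep_of_indep_of_le_right (hZi b a hba.le) ?_).symm
            exact (hRm (H b) Z S (fun t ht => hZH t b (S.le_max' t ht))).comap_le
          rw [h1, ← Measure.map_map hφ (hm1.prodMk hm2),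
            (indepFun_iff_map_prod_eq_prod_map_map hm1.aemeasurable hm2.aemeasurable).1 hi]
        rw [h2 F X hXm hXF hXi, h2 G Y hYm hYG hYi, ih, hinc b a hba.le]
  have hX' : Measurable (fun ω t => X t ω) := measurable_pi_lambda _ hXm
  have hY' : Measurable (fun ω t => Y t ω) := measurable_pi_lambda _ hYm
  rw [map_eq_iff_forall_finset_map_restrict_eq hX'.aemeasurable hY'.aemeasurable]
  intro I
  have h3 : ∀ Z : ℝ≥0 → Ω → ℝ, (∀ t, Measurable (Z t)) →
      P.map (fun ω ↦ I.restrict (Z · ω)) = (P.map (R Z I)).map I.restrict := by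
    intro Z hZ
    rw [Measure.map_map (Finset.measurable_restrict I) (hRm m0 Z I (fun t _ => hZ t))]
    congr 1
    ext ω t
    simp [R]
  rw [h3 X hXm, h3 Y hYm, main]

/-- If a Lévy process satisfies `X(T_x) = x` a.s. on `{T_x < ∞}` for every `x > 0`,
then its running supremum is a.s. continuous and it a.s. has no positive jumps. -/
theorem noPosJumps_of_stopVal_eq {Ω : Type*} {m0 : MeasurableSpace Ω}
    (P : Measure Ω) (F : MeasureTheory.Filtration ℝ m0) (X : ℝ → Ω → ℝ)
    (hX : IsLevy P F X)
    (h : ∀ x : ℝ, 0 < x →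
      P ({ω | stopVal X x ω = x} ∩ {ω | hitT X x ω < ⊤}) = P {ω | hitT X x ω < ⊤}) :
    (∀ᵐ ω ∂P, ContinuousOn (fun t => runSup X t ω) (Set.Ici (0 : ℝ))) ∧
    (∀ᵐ ω ∂P, ∀ t : ℝ, 0 ≤ t → X t ω ≤ leftLimAt (fun u => X u ω) t) := by
  haveI := hX.isProb
  have hXm : ∀ t, Measurable (X t) := fun t => (hX.adapted t).mono (F.le t) le_rfl
  have hpath : ∀ (Z : ℝ → Ω → ℝ), (∀ t, Measurable (Z t)) →
      Measurable (fun ω (t : ℝ≥0) => Z t ω) :=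
    fun Z hZ => measurable_pi_lambda _ fun t => hZ t
  have hset : ∀ (Z : ℝ → Ω → ℝ) (y z : ℝ), {ω | SkipE (fun t => Z t ω) y z} =
      (fun ω (t : ℝ≥0) => Z t ω) ⁻¹' {w : ℝ≥0 → ℝ | SkipE (fun t => w t.toNNReal) y z} := by
    intro Z y z
    ext ω
    simp only [mem_setOf_eq, mem_preimage]
    constructor
    · exact fun h => SkipE_congr (fun t ht => by simp [Real.coe_toNNReal t ht]) h
    · exact fun h => SkipE_congr (fun t ht => by simp [Real.coe_toNNReal t ht]) h
  have hEm : ∀ y z : ℝ, MeasurableSet {ω | SkipE (fun t => X t ω) y z} := by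
    intro y z
    rw [hset]
    exact hpath X hXm (measurableSet_skip y z)
  have hE0 : ∀ y z : ℝ, 0 < y → y < z → P {ω | SkipE (fun t => X t ω) y z} = 0 := by
    intro y z hy hyz
    set E := {ω | SkipE (fun t => X t ω) y z} with hE
    obtain ⟨x, hyx, hxz⟩ := exists_between hyz
    set A := {ω | stopVal X x ω = x}
    set B := {ω | hitT X x ω < ⊤}
    have h1 : P (B ∩ E) + P (B \ E) = P B := measure_inter_add_diff B (hEm y z)
    have h2 : P (A ∩ B) ≤ P (B \ E) := by
      refine measure_mono_ae ?_
      filter_upwards [hX.cadlag] with ω hω hAB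
      exact ⟨hAB.2, fun hc => (not_skip hω.1 hyx hxz hc).2 hAB.1⟩
    have h3 : P E ≤ P (B ∩ E) := by
      refine measure_mono_ae ?_
      filter_upwards [hX.cadlag] with ω hω hc
      exact ⟨(not_skip hω.1 hyx hxz hc).1, hc⟩
    rw [h x (hy.trans hyx), ← h1] at h2
    have h4 : P (B ∩ E) ≤ 0 := by
      have : P (B ∩ E) + P (B \ E) ≤ 0 + P (B \ E) := by simpa using h2
      exact (ENNReal.add_le_add_iff_right (measure_ne_top _ _)).1 this
    exact le_antisymm (h3.trans h4) zero_le
  have hlaw : ∀ q : ℝ, 0 ≤ q → P.map (fun ω (t : ℝ≥0) => X (q + t) ω - X q ω) =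
      P.map (fun ω (t : ℝ≥0) => X t ω) := by
    intro q hq
    refine law_eq P (fun t => F (q + t)) (fun t => F t) (fun t => F.le _) (fun t => F.le _)
      (fun t ω => X (q + t) ω - X q ω) (fun t => X t) ?_ ?_ ?_ ?_ ?_ ?_
    · intro s t hst
      have hst' : (s : ℝ) ≤ t := hst
      exact Measurable.sub ((hX.adapted _).mono (F.mono (by linarith)) le_rfl)
        ((hX.adapted _).mono (F.mono (by linarith [t.2])) le_rfl)
    · intro s t hst
      exact (hX.adapted _).mono (F.mono hst) le_rfl
    · intro s t hst
      have hst' : (s : ℝ) ≤ t := hst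
      have := hX.indep (q + s) (q + t) (by positivity) (by linarith)
      simpa using this
    · intro s t hst
      exact hX.indep s t s.2 hst
    · intro s t hst
      have hst' : (s : ℝ) ≤ t := hst
      have h1 := hX.statInc (q + s) (q + t) (by positivity) (by linarith)
      have h2 := hX.statInc s t s.2 hst
      rw [h2]
      simpa using h1
    · intro t
      have h1 := hX.statInc q (q + t) hq (by linarith [t.2])
      simpa using h1
  have hE1 : ∀ᵐ ω ∂P, ∀ q : ℚ, (0 : ℝ) ≤ q → ∀ y z : ℚ, (0 : ℝ) < y → (y : ℝ) < z →
      ¬ SkipE (fun t => X (q + t) ω - X q ω) y z := by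
    rw [ae_all_iff]; intro q
    by_cases hq : (0 : ℝ) ≤ q
    swap
    · exact ae_of_all _ fun ω hc => absurd hc hq
    simp only [hq, true_imp_iff]
    rw [ae_all_iff]; intro y
    rw [ae_all_iff]; intro z
    by_cases hyz : (0 : ℝ) < y ∧ (y : ℝ) < z
    swap
    · exact ae_of_all _ fun ω h1 h2 => absurd ⟨h1, h2⟩ hyz
    have h0 := hE0 y z hyz.1 hyz.2
    have hYm : ∀ t : ℝ, Measurable (fun ω => X (q + t) ω - X q ω) :=
      fun t => (hXm _).sub (hXm _)
    have h2 : P {ω | SkipE (fun t => X (q + t) ω - X q ω) y z} = 0 := by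
      rw [hset (fun t ω => X (q + t) ω - X q ω),
        ← Measure.map_apply (hpath _ hYm) (measurableSet_skip y z), hlaw q hq,
        Measure.map_apply (hpath X hXm) (measurableSet_skip y z), ← hset, h0]
    have h3 : ∀ᵐ ω ∂P, ¬ SkipE (fun t => X (q + t) ω - X q ω) y z := by
      rw [ae_iff]; simpa using h2
    filter_upwards [h3] with ω hω _ _ using hω
  have hstart : ∀ᵐ ω ∂P, X 0 ω = 0 :=
    (prob_compl_eq_zero_iff (hXm 0 (measurableSet_singleton 0))).2 hX.start
  constructor
  · filter_upwards [hE1, hX.cadlag, hstart] with ω h1 h2 h3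
    refine path_sup_cont h2 h3 fun τ c hτ hc hs => ?_
    refine path_level h2.1 ?_ hτ hc hs
    have := h1 0 (by simp)
    simpa [h3] using this
  · filter_upwards [hE1, hX.cadlag] with ω h1 h2
    exact path_jump h2 h1
end

section
/- Let X be a real-valued Lévy process on a filtered probability space satisfying the usual conditions. Define Q^x(B) := P({X(T_x) ∈ B} ∩ {T_x < ∞}) for Borel B ⊆ ℝ, and 𝒜 := {x ∈ ℝ : Q^x is carried by a singleton, i.e. ∃ r ∈ ℝ with Q^x(ℝ \ {r}) = 0}. If 𝒜 ∩ (0,∞) ≠ ∅, then 𝒜 = ℝ. -/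
open MeasureTheory ProbabilityTheory Filter Set
open scoped ENNReal Topology

def RC (f : ℝ → ℝ) : Prop := ∀ t : ℝ, 0 ≤ t → ContinuousWithinAt f (Set.Ici t) t

def Jump (f : ℝ → ℝ) (e c : ℝ) : Prop :=
  ∃ t : ℝ, 0 ≤ t ∧ (∀ s, 0 ≤ s → s < t → f s ≤ e) ∧ c < f t

def shiftP (f : ℝ → ℝ) (q : ℝ) : ℝ → ℝ := fun s => f (q + s) - f q

def KJ (f : ℝ → ℝ) (h e c : ℝ) : Prop :=
  ∃ k : ℕ, (∀ j : ℕ, j < k → f (j * h) ≤ e) ∧ c < f (k * h)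

lemma rc_open {f : ℝ → ℝ} (hf : RC f) {t : ℝ} (ht : 0 ≤ t) {U : Set ℝ} (hU : IsOpen U)
    (h : f t ∈ U) : ∃ ε > 0, ∀ s, t ≤ s → s < t + ε → f s ∈ U := by
  have h1 := hf t ht (hU.mem_nhds h)
  rw [Filter.mem_map, Metric.mem_nhdsWithin_iff] at h1
  obtain ⟨ε, hε, h1⟩ := h1
  refine ⟨ε, hε, fun s hs1 hs2 => h1 ⟨?_, hs1⟩⟩
  rw [Metric.mem_ball, Real.dist_eq, abs_lt]
  constructor <;> linarith

lemma rc_shift {f : ℝ → ℝ} (hf : RC f) {q : ℝ} (hq : 0 ≤ q) : RC (shiftP f q) := by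
  intro t ht
  have h1 := hf (q + t) (by linarith)
  refine ContinuousWithinAt.sub ?_ continuousWithinAt_const
  refine ContinuousWithinAt.comp (t := Ici (q+t)) (g := f) (f := fun s => q + s) h1
    (by fun_prop) ?_
  intro s hs
  simp only [mem_Ici] at *
  linarith

lemma first_passage {f : ℝ → ℝ} (hf : RC f) {t a : ℝ} (ht : 0 ≤ t) (h : a ≤ f t) :
    ∃ T, 0 ≤ T ∧ T ≤ t ∧ (∀ s, 0 ≤ s → s < T → f s < a) ∧ a ≤ f T := by
  set S : Set ℝ := {s | 0 ≤ s ∧ a ≤ f s} with hS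
  have hne : S.Nonempty := ⟨t, ht, h⟩
  have hbd : BddBelow S := ⟨0, fun s hs => hs.1⟩
  have h0 : 0 ≤ sInf S := le_csInf hne fun s hs => hs.1
  refine ⟨sInf S, h0, csInf_le hbd ⟨ht, h⟩, ?_, ?_⟩
  · intro s hs0 hs
    by_contra hc
    exact absurd (csInf_le hbd (show s ∈ S from ⟨hs0, not_lt.1 hc⟩)) (not_le.2 hs)
  · by_contra hc
    obtain ⟨ε, hε, h1⟩ := rc_open hf h0 isOpen_Iio (show f (sInf S) ∈ Iio a from not_le.1 hc)
    obtain ⟨s, hs, hs2⟩ := exists_lt_of_csInf_lt hne (show sInf S < sInf S + ε by linarith)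
    have := h1 s (csInf_le hbd hs) hs2
    exact absurd hs.2 (not_le.2 this)

lemma first_passage' {f : ℝ → ℝ} {t a : ℝ} (ht : 0 ≤ t) (h : a < f t) :
    ∃ T, 0 ≤ T ∧ (∀ s, 0 ≤ s → s < T → f s ≤ a) ∧
      (∀ δ > 0, ∃ s, T ≤ s ∧ s < T + δ ∧ a < f s) := by
  set S : Set ℝ := {s | 0 ≤ s ∧ a < f s} with hS
  have hne : S.Nonempty := ⟨t, ht, h⟩
  have hbd : BddBelow S := ⟨0, fun s hs => hs.1⟩
  have h0 : 0 ≤ sInf S := le_csInf hne fun s hs => hs.1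
  refine ⟨sInf S, h0, ?_, ?_⟩
  · intro s hs0 hs
    by_contra hc
    exact absurd (csInf_le hbd (show s ∈ S from ⟨hs0, not_le.1 hc⟩)) (not_le.2 hs)
  · intro δ hδ
    obtain ⟨s, hs, hs2⟩ := exists_lt_of_csInf_lt hne (show sInf S < sInf S + δ by linarith)
    exact ⟨s, csInf_le hbd hs, hs2, hs.2⟩

lemma grid_point {t h : ℝ} (ht : 0 ≤ t) (hh : 0 < h) :
    ∃ k : ℕ, t ≤ k * h ∧ k * h < t + h ∧ ∀ j : ℕ, j < k → j * h < t := by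
  refine ⟨⌈t / h⌉₊, ?_, ?_, ?_⟩
  · rw [← div_le_iff₀ hh]; exact Nat.le_ceil _
  · have := Nat.ceil_lt_add_one (div_nonneg ht hh.le)
    calc (⌈t / h⌉₊ : ℝ) * h < (t / h + 1) * h := by gcongr
      _ = t + h := by field_simp
  · intro j hj
    rw [← lt_div_iff₀ hh]; exact Nat.lt_ceil.1 hj

lemma step_pos (n : ℕ) : 0 < 1 / ((n : ℝ) + 1) := by positivity

lemma step_ev {ε : ℝ} (hε : 0 < ε) : ∀ᶠ n : ℕ in atTop, 1 / ((n : ℝ) + 1) < ε :=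
  tendsto_one_div_add_atTop_nhds_zero_nat.eventually (gt_mem_nhds hε)

lemma jump_to_KJ {f : ℝ → ℝ} (hf : RC f) {e c : ℝ} (h : Jump f e c) :
    ∀ᶠ n : ℕ in atTop, KJ f (1 / ((n : ℝ) + 1)) e c := by
  obtain ⟨t, ht, h1, h2⟩ := h
  obtain ⟨ε, hε, h3⟩ := rc_open hf ht isOpen_Ioi (show f t ∈ Ioi c from h2)
  filter_upwards [step_ev hε] with n hn
  obtain ⟨k, hk1, hk2, hk3⟩ := grid_point ht (step_pos n)
  exact ⟨k, fun j hj => h1 _ (by positivity) (hk3 j hj), h3 _ hk1 (by linarith)⟩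

lemma KJ_to_jump {f : ℝ → ℝ} (hf : RC f) {e c c' : ℝ} (hec : e < c) (hc : c' < c)
    (h : ∃ᶠ n : ℕ in atTop, KJ f (1 / ((n : ℝ) + 1)) e c) : Jump f e c' := by
  obtain ⟨n, k, hk1, hk2⟩ := h.exists
  obtain ⟨T, hT, h1, h2⟩ := first_passage' (f := f) (a := e) (t := k * (1 / ((n : ℝ) + 1)))
    (by positivity) (hec.trans hk2)
  refine ⟨T, hT, h1, lt_of_lt_of_le hc ?_⟩
  by_contra hcon
  obtain ⟨δ, hδ, h3⟩ := rc_open hf hT isOpen_Iio (show f T ∈ Iio c from not_le.1 hcon)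
  obtain ⟨t, ht1, ht2, ht3⟩ := h2 δ hδ
  have ht0 : 0 ≤ t := hT.trans ht1
  obtain ⟨ε, hε, h4⟩ := rc_open hf ht0 isOpen_Ioi (show f t ∈ Ioi e from ht3)
  obtain ⟨m, ⟨k, hk1, hk2⟩, hm⟩ := (h.and_eventually (step_ev (lt_min hε (sub_pos.2 ht2)))).exists
  obtain ⟨j, hj1, hj2, -⟩ := grid_point ht0 (step_pos m)
  have hm1 := lt_of_lt_of_le hm (min_le_left _ _)
  have hm2 := lt_of_lt_of_le hm (min_le_right _ _)
  have hj : e < f (j * (1 / ((m : ℝ) + 1))) := h4 _ hj1 (by linarith)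
  have hkj : k ≤ j := by
    by_contra hlt
    exact absurd (hk1 j (not_le.1 hlt)) (not_le.2 hj)
  have hle : (k : ℝ) * (1 / ((m : ℝ) + 1)) ≤ j * (1 / ((m : ℝ) + 1)) := by
    gcongr
  have hge : T ≤ k * (1 / ((m : ℝ) + 1)) := by
    by_contra hlt
    have := h1 _ (by positivity) (not_le.1 hlt)
    linarith
  have : f (k * (1 / ((m : ℝ) + 1))) < c := h3 _ hge (by linarith)
  linarith

section prob
variable {Ω : Type*} {m0 : MeasurableSpace Ω} {P : Measure Ω}
  {F : MeasureTheory.Filtration ℝ m0} {X : ℝ → Ω → ℝ}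

def incr (X : ℝ → Ω → ℝ) (q h : ℝ) (j : ℕ) (ω : Ω) : ℝ :=
  X (q + (j + 1 : ℕ) * h) ω - X (q + j * h) ω

lemma incr_box (hX : IsLevy P F X) {q h : ℝ} (hq : 0 ≤ q) (hh : 0 < h) {A : Set Ω}
    (hA : MeasurableSet[F q] A) (B : ℕ → Set ℝ) (hB : ∀ j, MeasurableSet (B j)) (k : ℕ) :
    MeasurableSet[F (q + k * h)] (A ∩ {ω | ∀ j < k, incr X q h j ω ∈ B j}) ∧
    P (A ∩ {ω | ∀ j < k, incr X q h j ω ∈ B j})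
      = P A * ∏ j ∈ Finset.range k, (P.map (X h)) (B j) := by
  induction k with
  | zero =>
    constructor
    · have e0 : q + ((0 : ℕ) : ℝ) * h = q := by simp
      rw [e0]; simpa using hA
    · simp
  | succ k ih =>
    have e1 : A ∩ {ω | ∀ j < k + 1, incr X q h j ω ∈ B j}
        = (A ∩ {ω | ∀ j < k, incr X q h j ω ∈ B j}) ∩ (incr X q h k ⁻¹' B k) := by
      ext ω
      simp only [mem_inter_iff, mem_ofPred_eq, mem_preimage, Nat.forall_lt_succ_right, and_assoc]
    have hle : q + k * h ≤ q + (k + 1 : ℕ) * h := by push_cast; nlinarith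
    have hm1 : Measurable[F (q + (k + 1 : ℕ) * h)] (incr X q h k) :=
      Measurable.sub (hX.adapted _) ((hX.adapted _).mono (F.mono hle) le_rfl)
    constructor
    · rw [e1]
      exact MeasurableSet.inter (F.mono hle _ ih.1) (hm1 (hB k))
    · have hind := hX.indep (q + k * h) (q + (k + 1 : ℕ) * h) (by positivity) hle
      rw [Indep_iff] at hind
      have := hind _ _ ⟨B k, hB k, rfl⟩ ih.1
      have hst := hX.statInc (q + k * h) (q + (k + 1 : ℕ) * h) (by positivity) hle
      have e2 : q + (k + 1 : ℕ) * h - (q + k * h) = h := by push_cast; ring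
      rw [e2] at hst
      have e3 : P ((fun ω => X (q + (k + 1 : ℕ) * h) ω - X (q + k * h) ω) ⁻¹' B k)
          = P.map (X h) (B k) := by
        rw [← hst, Measure.map_apply _ (hB k)]
        exact hm1.mono (F.le _) le_rfl
      rw [e1, inter_comm, Finset.prod_range_succ, ← mul_assoc, ← ih.2]
      rw [e3] at this
      rw [mul_comm (P (A ∩ _))]
      exact this

lemma incr_law (hX : IsLevy P F X) {q h : ℝ} (hq : 0 ≤ q) (hh : 0 < h) {A : Set Ω}
    (hA : MeasurableSet[F q] A) {S : Set (ℕ → ℝ)} (hS : MeasurableSet S) :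
    P (A ∩ {ω | (fun j => incr X q h j ω) ∈ S})
      = P A * (Measure.infinitePi (fun _ : ℕ => P.map (X h))) S := by
  have := hX.isProb
  have hXm : ∀ t, Measurable (X t) := fun t => (hX.adapted t).mono (F.le t) le_rfl
  have hA' : MeasurableSet A := F.le _ _ hA
  have : IsProbabilityMeasure (P.map (X h)) :=
    Measure.isProbabilityMeasure_map (hXm h).aemeasurable
  by_cases h0 : P A = 0
  · rw [h0, zero_mul]; exact measure_mono_null inter_subset_left h0
  have hξ : Measurable (fun ω => fun j => incr X q h j ω) :=
    measurable_pi_lambda _ fun j => (hXm _).sub (hXm _)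
  have key : (P[|A]).map (fun ω => fun j => incr X q h j ω)
      = Measure.infinitePi (fun _ : ℕ => P.map (X h)) := by
    refine Measure.eq_infinitePi _ fun s t ht => ?_
    classical
    obtain ⟨k, hk⟩ : ∃ k, s ⊆ Finset.range k := s.exists_nat_subset_range
    have hb := (incr_box hX hq hh hA (fun j => if j ∈ s then t j else univ)
      (fun j => by split_ifs <;> simp [ht]) k).2
    have es : {ω | ∀ j < k, incr X q h j ω ∈ (fun j => if j ∈ s then t j else univ) j}
        = (fun ω => fun j => incr X q h j ω) ⁻¹' (Set.pi s t) := by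
      ext ω
      simp only [mem_ofPred_eq, mem_preimage, Set.mem_pi, Finset.mem_coe]
      constructor
      · intro H j hj
        have := H j (Finset.mem_range.1 (hk hj))
        simpa [hj] using this
      · intro H j _
        by_cases hj : j ∈ s
        · simpa [hj] using H j hj
        · simp [hj]
    rw [es] at hb
    rw [Measure.map_apply hξ (MeasurableSet.pi s.countable_toSet fun i _ => ht i),
      cond_apply hA', hb, ← mul_assoc, ENNReal.inv_mul_cancel h0 (measure_ne_top _ _), one_mul]
    rw [← Finset.prod_subset hk (f := fun j => (P.map (X h)) (if j ∈ s then t j else univ))]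
    · refine Finset.prod_congr rfl fun j hj => by simp [hj]
    · intro j _ hj
      simp [hj]
  rw [← key, Measure.map_apply hξ hS, cond_apply hA', ← mul_assoc,
    ENNReal.mul_inv_cancel h0 (measure_ne_top _ _), one_mul]
  rfl

def walkSet (e c : ℝ) : Set (ℕ → ℝ) :=
  {x | ∃ k : ℕ, (∀ j : ℕ, j < k → ∑ i ∈ Finset.range j, x i ≤ e) ∧
    c < ∑ i ∈ Finset.range k, x i}

lemma walkSet_meas (e c : ℝ) : MeasurableSet (walkSet e c) := by
  have hm : ∀ k : ℕ, Measurable (fun x : ℕ → ℝ => ∑ i ∈ Finset.range k, x i) := fun k =>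
    Finset.measurable_sum _ fun i _ => measurable_pi_apply i
  have : walkSet e c = ⋃ k : ℕ, (⋂ j : ℕ, ⋂ _ : j < k,
      {x | ∑ i ∈ Finset.range j, x i ≤ e}) ∩ {x | c < ∑ i ∈ Finset.range k, x i} := by
    ext x; simp [walkSet]
  rw [this]
  refine MeasurableSet.iUnion fun k => MeasurableSet.inter ?_ ?_
  · exact MeasurableSet.iInter fun j => MeasurableSet.iInter fun _ =>
      measurableSet_le (hm j) measurable_const
  · exact measurableSet_lt measurable_const (hm k)

lemma KJ_iff (q h e c : ℝ) (ω : Ω) :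
    KJ (shiftP (fun t => X t ω) q) h e c ↔ (fun j => incr X q h j ω) ∈ walkSet e c := by
  have : ∀ k : ℕ, ∑ i ∈ Finset.range k, incr X q h i ω = shiftP (fun t => X t ω) q (k * h) := by
    intro k
    have := Finset.sum_range_sub (fun i : ℕ => X (q + i * h) ω) k
    simp only [incr, shiftP]
    rw [this]; simp
  simp only [KJ, walkSet, mem_ofPred_eq, this]

lemma rc_ae (hX : IsLevy P F X) : ∀ᵐ ω ∂P, RC (fun t => X t ω) := by
  filter_upwards [hX.cadlag] with ω h using h.1

/-- key Markov lemma -/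
lemma markov (hX : IsLevy P F X) {p q e c c' : ℝ} (hp : 0 ≤ p) (hq : 0 ≤ q) (hec : e < c)
    (hc : c' < c) {A : Set Ω} (hA : MeasurableSet[F q] A) (hA0 : P A ≠ 0)
    (h : P {ω | Jump (shiftP (fun t => X t ω) p) e c} ≠ 0) :
    P (A ∩ {ω | Jump (shiftP (fun t => X t ω) q) e c'}) ≠ 0 := by
  have := hX.isProb
  have hXm : ∀ t, Measurable (X t) := fun t => (hX.adapted t).mono (F.le t) le_rfl
  have hξ : ∀ q h, Measurable (fun ω => fun j => incr X q h j ω) := fun q h =>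
    measurable_pi_lambda _ fun j => (hXm _).sub (hXm _)
  set K : ℝ → ℕ → Set Ω := fun r n => {ω | KJ (shiftP (fun t => X t ω) r) (1 / ((n:ℝ)+1)) e c}
    with hK
  have hKm : ∀ r n, MeasurableSet (K r n) := by
    intro r n
    have : K r n = (fun ω => fun j => incr X r (1 / ((n:ℝ)+1)) j ω) ⁻¹' walkSet e c := by
      ext ω; exact KJ_iff _ _ _ _ _
    rw [this]
    exact hξ _ _ (walkSet_meas e c)
  have hlaw : ∀ n, P (A ∩ K q n) = P A * P (K p n) := by
    intro n
    have h1 := incr_law hX hq (step_pos n) hA (walkSet_meas e c)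
    have h2 := incr_law hX hp (step_pos n) (A := univ) MeasurableSet.univ (walkSet_meas e c)
    rw [measure_univ, one_mul, univ_inter] at h2
    rw [← h2] at h1
    simpa only [hK, KJ_iff] using h1
  -- liminf
  have hG : P (⋃ m : ℕ, ⋂ n : ℕ, ⋂ _ : m ≤ n, K p n) ≠ 0 := by
    intro h0
    apply h
    rw [← nonpos_iff_eq_zero, ← h0]
    refine measure_mono_ae ?_
    filter_upwards [rc_ae hX] with ω hω hJ
    obtain ⟨m, hm⟩ := eventually_atTop.1 (jump_to_KJ (rc_shift hω hp) hJ)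
    exact mem_iUnion.2 ⟨m, mem_iInter₂.2 fun n hn => hm n hn⟩
  obtain ⟨m, hm⟩ : ∃ m : ℕ, P (⋂ n : ℕ, ⋂ _ : m ≤ n, K p n) ≠ 0 := by
    by_contra hcon
    push Not at hcon
    exact hG (measure_iUnion_null hcon)
  set ε := P (⋂ n : ℕ, ⋂ _ : m ≤ n, K p n)
  have hbound : ∀ n, m ≤ n → P A * ε ≤ P (A ∩ K q n) := by
    intro n hn
    rw [hlaw]
    gcongr
    exact measure_mono (iInter₂_subset n hn)
  have hlim : P A * ε ≤ P (⋂ N : ℕ, ⋃ n : ℕ, ⋃ _ : N ≤ n, A ∩ K q n) := by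
    have hanti : Antitone fun N : ℕ => ⋃ n : ℕ, ⋃ _ : N ≤ n, A ∩ K q n := by
      intro a b hab
      exact iUnion_mono fun n => iUnion_mono' fun hn => ⟨hab.trans hn, le_rfl⟩
    have ht := tendsto_measure_iInter_atTop (μ := P)
      (s := fun N : ℕ => ⋃ n : ℕ, ⋃ _ : N ≤ n, A ∩ K q n)
      (fun N => (MeasurableSet.iUnion fun n => MeasurableSet.iUnion fun _ =>
        (F.le _ _ hA).inter (hKm _ _)).nullMeasurableSet) hanti ⟨0, measure_ne_top _ _⟩
    refine ge_of_tendsto' ht fun N => ?_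
    refine (hbound (max m N) (le_max_left _ _)).trans (measure_mono ?_)
    exact subset_iUnion₂_of_subset (max m N) (le_max_right _ _) le_rfl
  intro h0
  have : P A * ε ≠ 0 := mul_ne_zero hA0 hm
  apply this
  rw [← nonpos_iff_eq_zero]
  refine hlim.trans ?_
  rw [← h0]
  refine measure_mono_ae ?_
  filter_upwards [rc_ae hX] with ω hω hJ
  have hJ' : ∀ N : ℕ, ∃ n, N ≤ n ∧ ω ∈ A ∧ ω ∈ K q n := by
    intro N
    have := mem_iInter.1 hJ N
    obtain ⟨n, hn⟩ := mem_iUnion.1 this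
    obtain ⟨hn1, hn2⟩ := mem_iUnion.1 hn
    exact ⟨n, hn1, hn2.1, hn2.2⟩
  refine ⟨(hJ' 0).choose_spec.2.1, KJ_to_jump (rc_shift hω hq) hec hc ?_⟩
  rw [frequently_atTop]
  intro N
  obtain ⟨n, hn, -, h3⟩ := hJ' N
  exact ⟨n, hn, h3⟩

def Dset (P : Measure Ω) (X : ℝ → Ω → ℝ) : Set ℝ :=
  {d | 0 < d ∧ ∀ e c, e < d → d < c → P {ω | Jump (fun t => X t ω) e c} = 0}

lemma start_ae (hX : IsLevy P F X) : ∀ᵐ ω ∂P, X 0 ω = 0 := by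
  have := hX.isProb
  have hm : MeasurableSet {ω | X 0 ω = 0} :=
    ((hX.adapted 0).mono (F.le 0) le_rfl) (measurableSet_singleton 0)
  exact (prob_compl_eq_zero_iff hm).2 hX.start

lemma jump_shift0 (hX : IsLevy P F X) (e c : ℝ) :
    P {ω | Jump (shiftP (fun t => X t ω) 0) e c} = P {ω | Jump (fun t => X t ω) e c} := by
  refine measure_congr ?_
  filter_upwards [start_ae hX] with ω hω
  have : shiftP (fun t => X t ω) 0 = fun t => X t ω := by
    funext s; simp [shiftP, hω]
  exact propext (by change Jump _ _ _ ↔ Jump _ _ _; rw [this])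

lemma D_null (hX : IsLevy P F X) {d e c q : ℝ} (hd : d ∈ Dset P X) (hq : 0 ≤ q) (he : e < d)
    (hc : d < c) : P {ω | Jump (shiftP (fun t => X t ω) q) e c} = 0 := by
  have := hX.isProb
  by_contra h
  have h1 := markov hX (c' := (d + c) / 2) hq le_rfl (he.trans hc) (by linarith)
    (A := univ) MeasurableSet.univ (by simp) h
  rw [univ_inter, jump_shift0 hX] at h1
  exact h1 (hd.2 _ _ he (by linarith))

lemma D_ae (hX : IsLevy P F X) {d : ℝ} (hd : d ∈ Dset P X) :
    ∀ᵐ ω ∂P, ∀ e c, e < d → d < c → ¬ Jump (fun t => X t ω) e c := by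
  have h1 : ∀ᵐ ω ∂P, ∀ n m : ℕ,
      ¬ Jump (fun t => X t ω) (d - 1 / ((n:ℝ)+1)) (d + 1 / ((m:ℝ)+1)) := by
    rw [ae_all_iff]; intro n; rw [ae_all_iff]; intro m
    have := hd.2 (d - 1 / ((n:ℝ)+1)) (d + 1 / ((m:ℝ)+1)) (by linarith [step_pos n])
      (by linarith [step_pos m])
    rw [ae_iff]; simpa using this
  filter_upwards [h1] with ω h e c he hc ⟨t, ht, h2, h3⟩
  obtain ⟨n, hn⟩ := (step_ev (sub_pos.2 he)).exists
  obtain ⟨m, hm⟩ := (step_ev (sub_pos.2 hc)).exists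
  refine h n m ⟨t, ht, fun s hs hst => (h2 s hs hst).trans (by linarith), by linarith⟩

lemma rat_between {a b : ℝ} (h : a < b) : ∃ q : ℚ, a < q ∧ (q : ℝ) < b := exists_rat_btwn h

lemma D_add (hX : IsLevy P F X) {d d' : ℝ} (hd : d ∈ Dset P X) (hd' : d' ∈ Dset P X) :
    d + d' ∈ Dset P X := by
  refine ⟨add_pos hd.1 hd'.1, fun a b ha hb => ?_⟩
  obtain ⟨η, hη, h1, h2⟩ : ∃ η > 0, a + 4 * η ≤ d + d' ∧ d + d' + 4 * η ≤ b := by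
    refine ⟨min ((d + d' - a) / 4) ((b - d - d') / 4), lt_min (by linarith) (by linarith), ?_, ?_⟩
    · linarith [min_le_left ((d + d' - a) / 4) ((b - d - d') / 4)]
    · linarith [min_le_right ((d + d' - a) / 4) ((b - d - d') / 4)]
  have hq : ∀ᵐ ω ∂P, ∀ q : ℚ, 0 ≤ (q : ℝ) →
      ¬ Jump (shiftP (fun t => X t ω) q) (d' - 2 * η) (d' + 2 * η) := by
    rw [ae_all_iff]; intro q
    by_cases h0 : 0 ≤ (q : ℝ)
    · have := D_null hX hd' h0 (show d' - 2 * η < d' by linarith) (show d' < d' + 2 * η by linarith)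
      filter_upwards [measure_eq_zero_iff_ae_notMem.1 this] with ω hω _ using hω
    · exact ae_of_all _ fun ω h => absurd h h0
  rw [measure_eq_zero_iff_ae_notMem]
  filter_upwards [rc_ae hX, hq, D_ae hX hd] with ω hf hqω hdω hJ
  obtain ⟨t, ht, hlow, hhigh⟩ : Jump (fun t => X t ω) a b := hJ
  set f : ℝ → ℝ := fun t => X t ω with hfdef
  have hd'0 := hd'.1
  obtain ⟨T, hT, hTt, hT1, hT2⟩ := first_passage hf (a := d - η) ht (by linarith)
  have hT3 : f T ≤ d + η := by
    by_contra hcon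
    exact hdω (d - η) (d + η) (by linarith) (by linarith)
      ⟨T, hT, fun s hs hs2 => (hT1 s hs hs2).le, not_le.1 hcon⟩
  have hTlt : T < t := by
    rcases hTt.lt_or_eq with h | h
    · exact h
    · rw [h] at hT3; linarith
  obtain ⟨ε, hε, hopen⟩ := rc_open hf hT isOpen_Ioo
    (show f T ∈ Ioo (d - 2 * η) (d + 2 * η) from ⟨by linarith, by linarith⟩)
  obtain ⟨q, hq1, hq2⟩ := exists_rat_btwn (show T < min t (T + ε) from lt_min hTlt (by linarith))
  have hqt := hq2.trans_le (min_le_left _ _)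
  obtain ⟨hq3, hq4⟩ := hopen q hq1.le (hq2.trans_le (min_le_right _ _))
  have hq0 : (0:ℝ) ≤ q := hT.trans hq1.le
  refine hqω q hq0 ⟨t - q, by linarith, fun s hs hst => ?_, ?_⟩
  · have := hlow (q + s) (by linarith) (by linarith)
    simp only [shiftP]
    linarith
  · simp only [shiftP, add_sub_cancel]
    linarith

lemma D_gap (hX : IsLevy P F X) {a d : ℝ} (hd : d ∈ Dset P X)
    (hgap : ∀ e, 0 < e → e < d - a → e ∉ Dset P X) :
    ∀ᵐ ω ∂P, ∀ q b : ℚ, 0 ≤ (q : ℝ) → (b : ℝ) < d →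
      (∀ s : ℚ, 0 ≤ (s : ℝ) → (s : ℝ) ≤ q → X s ω ≤ b) → a < X q ω → X q ω < d → False := by
  have := hX.isProb
  have hXm : ∀ t, Measurable (X t) := fun t => (hX.adapted t).mono (F.le t) le_rfl
  rw [ae_all_iff]; intro q
  rw [ae_all_iff]; intro b
  by_cases hq : 0 ≤ (q : ℝ)
  swap
  · exact ae_of_all _ fun ω h => absurd h hq
  by_cases hb : (b : ℝ) < d
  swap
  · exact ae_of_all _ fun ω _ h => absurd h hb
  set A : Set Ω := ⋂ s : ℚ, ⋂ _ : 0 ≤ (s : ℝ), ⋂ _ : (s : ℝ) ≤ q, {ω | X s ω ≤ b} with hA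
  have hAm : MeasurableSet[F q] A :=
    MeasurableSet.iInter fun s => MeasurableSet.iInter fun _ => MeasurableSet.iInter fun hs =>
      ((hX.adapted s).mono (F.mono hs) le_rfl) measurableSet_Iic
  have hnull : ((P.restrict A).map (X q)) (Ioo a d) = 0 := by
    refine measure_null_of_locally_null _ fun z hz => ?_
    have hnot := hgap (d - z) (by linarith [hz.2]) (by linarith [hz.1])
    obtain ⟨e1, c1, he1, hc1, hJ⟩ : ∃ e1 c1, e1 < d - z ∧ d - z < c1 ∧
        P {ω | Jump (fun t => X t ω) e1 c1} ≠ 0 := by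
      by_contra hcon
      push Not at hcon
      exact hnot ⟨by linarith [hz.2], hcon⟩
    rw [← jump_shift0 hX] at hJ
    set c' := (d - z + c1) / 2 with hc'
    obtain ⟨η, hη, h1, h2⟩ : ∃ η > 0, e1 + 2 * η ≤ d - z ∧ d - z + 2 * η ≤ c' := by
      refine ⟨min ((d - z - e1) / 2) ((c' - (d - z)) / 2), lt_min (by linarith) (by linarith),
        ?_, ?_⟩
      · linarith [min_le_left ((d - z - e1) / 2) ((c' - (d - z)) / 2)]
      · linarith [min_le_right ((d - z - e1) / 2) ((c' - (d - z)) / 2)]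
    refine ⟨Ioo (z - η) (z + η), mem_nhdsWithin_of_mem_nhds
      (Ioo_mem_nhds (by linarith) (by linarith)), ?_⟩
    rw [Measure.map_apply (hXm _) measurableSet_Ioo,
      Measure.restrict_apply (hXm _ measurableSet_Ioo)]
    by_contra hpos
    have hmk := markov hX le_rfl hq (he1.trans hc1) (show c' < c1 by linarith)
      (MeasurableSet.inter (hX.adapted q measurableSet_Ioo) hAm) hpos hJ
    apply hmk
    rw [measure_eq_zero_iff_ae_notMem]
    filter_upwards [rc_ae hX, D_ae hX hd] with ω hf hdω hmem
    obtain ⟨⟨⟨hz1, hz2⟩, hωA⟩, t, ht, hlow, hhigh⟩ := hmem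
    set f : ℝ → ℝ := fun t => X t ω with hfdef
    have hfq : X q ω = f q := rfl
    rw [hfq] at hz1 hz2
    simp only [shiftP] at hlow hhigh
    have hωA' : ∀ s : ℚ, 0 ≤ (s : ℝ) → (s : ℝ) ≤ q → f s ≤ b := by
      simpa [hA] using hωA
    refine hdω (max b (d - η)) (d + η) (max_lt hb (by linarith)) (by linarith)
      ⟨q + t, by linarith, fun s hs hst => ?_, by linarith⟩
    rcases lt_or_ge s q with hsq | hsq
    · refine le_trans ?_ (le_max_left _ _)
      by_contra hcon
      obtain ⟨ε, hε, hopen⟩ := rc_open hf hs isOpen_Ioi (show f s ∈ Ioi (b:ℝ) from not_le.1 hcon)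
      obtain ⟨r, hr1, hr2⟩ := exists_rat_btwn (show s < min (q : ℝ) (s + ε) from
        lt_min hsq (by linarith))
      have g1 := hopen r hr1.le (hr2.trans_le (min_le_right _ _))
      have g2 := hωA' r (hs.trans hr1.le) (hr2.le.trans (min_le_left _ _))
      exact absurd g2 (not_le.2 g1)
    · refine le_trans ?_ (le_max_right _ _)
      have := hlow (s - q) (by linarith) (by linarith)
      rw [add_sub_cancel] at this
      linarith
  rw [Measure.map_apply (hXm _) measurableSet_Ioo,
      Measure.restrict_apply (hXm _ measurableSet_Ioo)] at hnull
  filter_upwards [measure_eq_zero_iff_ae_notMem.1 hnull] with ω hω _ _ h1 h2 h3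
  refine hω ⟨⟨h2, h3⟩, ?_⟩
  simpa [hA] using h1

lemma hit_spec {ω : Ω} (hf : RC (fun t => X t ω)) {x : ℝ} (h : hitT X x ω < ⊤) :
    ∃ T, 0 ≤ T ∧ (∀ s, 0 ≤ s → s < T → X s ω < x) ∧ x ≤ X T ω ∧ stopVal X x ω = X T ω := by
  obtain ⟨_, ⟨t, ⟨ht0, ht⟩, rfl⟩, -⟩ := sInf_lt_iff.1 h
  obtain ⟨T, hT, -, h1, h2⟩ := first_passage hf ht0 ht
  refine ⟨T, hT, h1, h2, ?_⟩
  have : hitT X x ω = ENNReal.ofReal T := by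
    refine le_antisymm (sInf_le ⟨T, ⟨hT, h2⟩, rfl⟩) (le_sInf ?_)
    rintro _ ⟨s, ⟨hs, hs2⟩, rfl⟩
    refine ENNReal.ofReal_le_ofReal ?_
    by_contra hc
    exact absurd hs2 (not_le.2 (h1 s hs (not_le.1 hc)))
  rw [stopVal, this, ENNReal.toReal_ofReal hT]

lemma Q_of_ae {x r : ℝ} (h : ∀ᵐ ω ∂P, hitT X x ω < ⊤ → stopVal X x ω = r) :
    Qfun P X x ({r}ᶜ) = 0 := by
  rw [Qfun, measure_eq_zero_iff_ae_notMem]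
  filter_upwards [h] with ω hω hm
  exact hm.1 (hω hm.2)

lemma ae_of_Q {x r : ℝ} (h : Qfun P X x ({r}ᶜ) = 0) :
    ∀ᵐ ω ∂P, hitT X x ω < ⊤ → stopVal X x ω = r := by
  rw [Qfun, measure_eq_zero_iff_ae_notMem] at h
  filter_upwards [h] with ω hω hm
  by_contra hc
  exact hω ⟨hc, hm⟩

lemma D_init (hX : IsLevy P F X) {x r : ℝ} (hx : 0 < x) (h : Qfun P X x ({r}ᶜ) = 0) :
    max r x ∈ Dset P X := by
  refine ⟨hx.trans_le (le_max_right _ _), fun e c he hc => ?_⟩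
  rw [measure_eq_zero_iff_ae_notMem]
  filter_upwards [rc_ae hX, ae_of_Q h] with ω hf hω hJ
  obtain ⟨t, ht, h1, h2⟩ := hJ
  have hxt : x ≤ X t ω := ((le_max_right r x).trans_lt hc).le.trans h2.le
  have hfin : hitT X x ω < ⊤ :=
    lt_of_le_of_lt (sInf_le ⟨t, ⟨ht, hxt⟩, rfl⟩) ENNReal.ofReal_lt_top
  have hr := hω hfin
  obtain ⟨T, hT, h3, h4, h5⟩ := hit_spec hf hfin
  rw [h5] at hr
  rw [hr] at h4
  rw [max_eq_left h4] at he hc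
  have hTt : T ≤ t := by
    by_contra hcon
    linarith [h3 t ht (not_le.1 hcon)]
  rcases hTt.lt_or_eq with hlt | rfl
  · linarith [h1 T hT hlt]
  · simp only at h2; linarith

lemma D_mul (hX : IsLevy P F X) {d : ℝ} (hd : d ∈ Dset P X) (n : ℕ) :
    ((n : ℝ) + 1) * d ∈ Dset P X := by
  induction n with
  | zero => simpa using hd
  | succ n ih =>
    have := D_add hX ih hd
    convert this using 1
    push_cast; ring

lemma final_zero (hX : IsLevy P F X) (h0 : ∀ ε > 0, ∃ δ ∈ Dset P X, δ < ε) {x : ℝ} (hx : 0 < x) :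
    Qfun P X x ({x}ᶜ) = 0 := by
  have hall : ∀ y, 0 < y → y ∈ Dset P X := by
    intro y hy
    refine ⟨hy, fun e c he hc => ?_⟩
    obtain ⟨δ, hδ, hδ2⟩ := h0 (c - y) (by linarith)
    obtain ⟨k, hk1, hk2, -⟩ := grid_point hy.le hδ.1
    cases k with
    | zero => simp at hk1; linarith
    | succ k =>
      have := D_mul hX hδ k
      push_cast at hk1 hk2
      exact this.2 e c (by linarith) (by linarith)
  refine Q_of_ae ?_
  have h1 : ∀ᵐ ω ∂P, ∀ n : ℕ, ¬ Jump (fun t => X t ω) x (x + 2 * (1 / ((n:ℝ)+1))) := by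
    rw [ae_all_iff]; intro n
    have hp := step_pos n
    filter_upwards [D_ae hX (hall (x + 1 / ((n:ℝ)+1)) (by linarith))] with ω hω
    exact hω _ _ (by linarith) (by linarith)
  filter_upwards [rc_ae hX, h1] with ω hf hω hfin
  obtain ⟨T, hT, h3, h4, h5⟩ := hit_spec hf hfin
  rw [h5]
  by_contra hne
  have hlt : x < X T ω := lt_of_le_of_ne h4 (Ne.symm hne)
  obtain ⟨n, hn⟩ := (step_ev (show 0 < (X T ω - x) / 2 by linarith)).exists
  exact hω n ⟨T, hT, fun s hs hst => (h3 s hs hst).le, by simp only; linarith⟩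

lemma final_pos (hX : IsLevy P F X) {a d x : ℝ} (hd : d ∈ Dset P X)
    (hgap : ∀ e, 0 < e → e < d - a → e ∉ Dset P X) (hax : a < x) (hxd : x ≤ d) :
    Qfun P X x ({d}ᶜ) = 0 := by
  refine Q_of_ae ?_
  filter_upwards [rc_ae hX, D_gap hX hd hgap, D_ae hX hd] with ω hf hg hj hfin
  obtain ⟨T, hT, h3, h4, h5⟩ := hit_spec hf hfin
  rw [h5]
  have had : a < d := hax.trans_le hxd
  have key : ∀ T y, 0 ≤ T → y < d → (∀ s, 0 ≤ s → s < T → X s ω ≤ y) → a < X T ω →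
      d ≤ X T ω := by
    intro T y hT hy hs ha
    by_contra hcon
    rw [not_le] at hcon
    obtain ⟨b, hb1, hb2⟩ := exists_rat_btwn (max_lt hy hcon)
    obtain ⟨ε, hε, hopen⟩ := rc_open hf hT isOpen_Ioo
      (show (fun t => X t ω) T ∈ Ioo a (b : ℝ) from ⟨ha, (le_max_right _ _).trans_lt hb1⟩)
    obtain ⟨q, hq1, hq2⟩ := exists_rat_btwn (show T < T + ε by linarith)
    have hq3 := hopen q hq1.le hq2
    refine hg q b (hT.trans hq1.le) hb2 (fun s hs0 hsq => ?_) hq3.1 (hq3.2.trans hb2)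
    rcases lt_or_ge (s : ℝ) T with h | h
    · exact (hs s hs0 h).trans ((le_max_left _ _).trans hb1.le)
    · exact (hopen s h (hsq.trans_lt hq2)).2.le
  have hbefore : ∀ s, 0 ≤ s → s < T → X s ω ≤ a := by
    intro s hs hsT
    by_contra hcon
    rw [not_le] at hcon
    obtain ⟨y, hy1, hy2⟩ := exists_between hcon
    have hsx := h3 s hs hsT
    obtain ⟨T', hT', hTs, h6, h7⟩ := first_passage hf (a := y) hs hy2.le
    have h8 := key T' y hT' (by linarith) (fun s hs hs2 => (h6 s hs hs2).le)
      (lt_of_lt_of_le hy1 h7)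
    have h9 := h3 T' hT' (by linarith)
    linarith
  have hge := key T a hT had hbefore (by linarith)
  by_contra hne
  have hlt : d < X T ω := lt_of_le_of_ne hge (Ne.symm hne)
  exact hj a ((d + X T ω) / 2) had (by linarith) ⟨T, hT, hbefore, by simp only; linarith⟩

end prob

/-- If `Q^x` is carried by a singleton for some `x > 0`, then it is so for every `x ∈ ℝ`. -/
theorem carried_by_singleton_everywhere {Ω : Type*} {m0 : MeasurableSpace Ω}
    (P : Measure Ω) (F : MeasureTheory.Filtration ℝ m0) (X : ℝ → Ω → ℝ)
    (hX : IsLevy P F X)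
    (hA : ({x : ℝ | ∃ r : ℝ, Qfun P X x ({r}ᶜ) = 0} ∩ Set.Ioi (0 : ℝ)).Nonempty) :
    {x : ℝ | ∃ r : ℝ, Qfun P X x ({r}ᶜ) = 0} = Set.univ := by
  rw [Set.eq_univ_iff_forall]
  intro x
  obtain ⟨x0, ⟨r, hr⟩, hx0⟩ := hA
  rcases le_or_gt x 0 with hx | hx
  · refine ⟨0, Q_of_ae ?_⟩
    filter_upwards [start_ae hX] with ω hω _
    have : hitT X x ω = 0 := by
      refine le_antisymm (sInf_le ⟨0, ⟨le_rfl, by rw [hω]; exact hx⟩, by simp⟩) zero_le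
    rw [stopVal, this, ENNReal.toReal_zero, hω]
  have hne : (Dset P X).Nonempty := ⟨_, D_init hX hx0 hr⟩
  have hbd : BddBelow (Dset P X) := ⟨0, fun d hd => hd.1.le⟩
  have h0 : 0 ≤ sInf (Dset P X) := le_csInf hne fun d hd => hd.1.le
  rcases h0.eq_or_lt with h0 | h0
  · refine ⟨x, final_zero hX (fun ε hε => ?_) hx⟩
    exact exists_lt_of_csInf_lt hne (by rw [← h0]; exact hε)
  · set d0 := sInf (Dset P X) with hd0
    have hmem : d0 ∈ Dset P X := by
      refine ⟨h0, fun e c he hc => ?_⟩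
      obtain ⟨d, hd, hdc⟩ := exists_lt_of_csInf_lt hne hc
      exact hd.2 e c (he.trans_le (csInf_le hbd hd)) hdc
    obtain ⟨k, hk1, hk2, hk3⟩ := grid_point hx.le h0
    cases k with
    | zero => simp at hk1; linarith
    | succ k =>
      have := D_mul hX hmem k
      push_cast at hk1
      refine ⟨_, final_pos hX (a := k * d0) this (fun e he1 he2 he3 => ?_) (hk3 k k.lt_succ_self)
        hk1⟩
      have := csInf_le hbd he3
      linarith
end
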